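/- arXiv:2103.09625 — 4 statements merged into one kernel-verified Lean document; each statement's English description precedes it below -/
import Mathlib

section
/- Razumikhin-type exponential stability with impulses (scalar Lyapunov form of Lemma 1). Let τ > 0 and let t0 < t1 < t2 < ⋯ be a strictly increasing sequence of impulse times tending to ∞. Let W : [t0 − τ, ∞) → [0, ∞) be continuous on [t0 − τ, t0] and on each interval (t_{k−1}, t_k], with a right limit W(t_k⁺) at each t_k. Suppose there are constants c > 0, σ > 0, λ > 0, γ ≥ 1, and q ≥ γ e^{λτ} with σ − λ ≥ c, and constants η_k with 0 < η_k ≤ 1, such that: (ii) for each k and each t ∈ [t_{k−1}, t_k) at which the Razumikhin condition q W(t) ≥ W(t+θ) holds for all θ ∈ [−τ, 0], the upper right Dini derivative satisfies D⁺W(t) ≤ c W(t); (iii) W(t_k⁺) ≤ η_k W(t_k) for every k; (iv) γ ≥ 1/η_k and ln η_k < −(σ + λ)(t_{k+1} − t_k) for every k. Then W(t) ≤ γ (sup_{θ ∈ [−τ, 0]} W(t0 + θ)) e^{−λ(t − t0)} for all t ≥ t0; in particular W converges to 0 exponentially with rate λ. -/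
open Filter Set

open scoped Topology

/-!
Fix `M` bounding `W` on the initial interval and slightly enlarge it to be positive. On an interval
`(t k, t (k + 1)]` the envelope `M * exp (-lam * (u - t 0))` is propagated by comparing `W` with the
increasing exponential of rate `σ` that *ends* on the envelope at `t (k + 1)`. The impulse pushes
`W` below the start of this barrier. Where `W` first touches the barrier, the past of `W` lies below
the envelope, so by the size of `q` the Razumikhin condition holds; hence `W` grows there at rate at
most `c < σ`, too slowly to cross.
-/

/-- The upper right Dini derivative `D⁺f(x)`, with values in `EReal` so that infinite values need no
side conditions. -/
noncomputable def upperRightDini (f : ℝ → ℝ) (x : ℝ) : EReal :=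
  limsup (fun h : ℝ => (((f (x + h) - f x) / h : ℝ) : EReal)) (𝓝[>] 0)

section Comparison

variable {f B : ℝ → ℝ}

theorem eventually_slope_lt_of_upperRightDini_lt {x r : ℝ} (h : upperRightDini f x < r) :
    ∀ᶠ y in 𝓝[>] x, slope f x y < r := by
  have hquot : ∀ᶠ h in 𝓝[>] (0 : ℝ), slope f x (x + h) < r := by
    filter_upwards [eventually_lt_of_limsup_lt h] with h hh
    rw [slope_def_field, add_sub_cancel_left]
    exact_mod_cast hh
  rw [← add_zero x, ← map_add_left_nhdsGT, add_zero]
  exact hquot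

theorem eventually_lt_of_upperRightDini_lt {x B' : ℝ} (hB : HasDerivWithinAt B B' (Ioi x) x)
    (hle : f x ≤ B x) (hlt : upperRightDini f x < B') : ∀ᶠ y in 𝓝[>] x, f y < B y := by
  obtain ⟨r, hfr, hrB⟩ := EReal.lt_iff_exists_real_btwn.1 hlt
  have hslopeB : ∀ᶠ y in 𝓝[>] x, r < slope B x y :=
    ((hasDerivWithinAt_iff_tendsto_slope' self_notMem_Ioi).1 hB).eventually_const_lt
      (EReal.coe_lt_coe_iff.1 hrB)
  filter_upwards [eventually_slope_lt_of_upperRightDini_lt hfr, hslopeB, self_mem_nhdsWithin]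
    with y hfy hBy hxy
  have hslope := hfy.trans hBy
  rw [slope_def_field, slope_def_field, div_lt_div_iff_of_pos_right (sub_pos.2 hxy)] at hslope
  linarith

/-- At a contact point the Dini bound may use that `f` has stayed below the barrier so far, which
is what a Razumikhin condition needs. -/
theorem le_barrier_of_upperRightDini_lt_of_contact {B' : ℝ → ℝ} {a b : ℝ}
    (hf : ContinuousOn f (Ioc a b)) (hB : ContinuousOn B (Ioc a b))
    (hB' : ∀ x ∈ Ioo a b, HasDerivWithinAt B (B' x) (Ioi x) x)
    (hstart : ∀ᶠ y in 𝓝[>] a, f y ≤ B y)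
    (hcontact : ∀ x ∈ Ioo a b, (∀ y ∈ Ioc a x, f y ≤ B y) → f x = B x →
      upperRightDini f x < B' x) :
    ∀ u ∈ Ioc a b, f u ≤ B u := by
  intro u hu
  obtain ⟨v, hav, hv⟩ := mem_nhdsGT_iff_exists_Ioc_subset.1 hstart
  set m := min v u
  have ham : a < m := lt_min hav hu.1
  have hIcc : Icc m u ⊆ Ioc a b := fun y hy => ⟨ham.trans_le hy.1, hy.2.trans hu.2⟩
  have hclosed : IsClosed ({y | f y ≤ B y} ∩ Icc m u) := by
    rw [inter_comm]
    exact isClosed_Icc.isClosed_le (hf.mono hIcc) (hB.mono hIcc)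
  refine hclosed.Icc_subset_of_forall_mem_nhdsGT_of_Icc_subset (hv ⟨ham, min_le_left v u⟩) ?_
    ⟨min_le_right v u, le_rfl⟩
  intro x hx hbelow
  have hxab : x ∈ Ioo a b := ⟨ham.trans_le hx.1, hx.2.trans_le hu.2⟩
  have hpast : ∀ y ∈ Ioc a x, f y ≤ B y := fun y hy =>
    (le_total y m).elim (fun hym => hv ⟨hy.1, hym.trans (min_le_left v u)⟩)
      (fun hmy => hbelow ⟨hmy, hy.2⟩)
  have hright : 𝓝[>] x ≤ 𝓝[Ioc a b] x := by
    rw [← nhdsWithin_Ioo_eq_nhdsGT hxab.2]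
    exact nhdsWithin_mono x fun y hy => ⟨hxab.1.trans hy.1, hy.2.le⟩
  rcases (hpast x ⟨hxab.1, le_rfl⟩).lt_or_eq with hlt | heq
  · exact (((hf x ⟨hxab.1, hxab.2.le⟩).mono_left hright).eventually_lt
      ((hB x ⟨hxab.1, hxab.2.le⟩).mono_left hright) hlt).mono fun y hy => hy.le
  · exact (eventually_lt_of_upperRightDini_lt (hB' x hxab) heq.le
      (hcontact x hxab hpast heq)).mono fun y hy => hy.le

end Comparison

/-- The exponential envelope of rate `lam` with value `M` at time `s`, the bound to be
propagated along the impulse intervals. -/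
noncomputable def decayEnvelope (M lam s u : ℝ) : ℝ :=
  M * Real.exp (-lam * (u - s))

/-- The barrier used on an impulse interval with right endpoint `b`: the exponential growing at rate
`σ` and normalised to meet `decayEnvelope M lam s` at `b`. -/
noncomputable def growthBarrier (M lam σ s b u : ℝ) : ℝ :=
  M * Real.exp (-lam * (b - s) + σ * (u - b))

section Envelope

variable {M lam σ s a b u v : ℝ}

theorem decayEnvelope_pos (hM : 0 < M) : 0 < decayEnvelope M lam s u :=
  mul_pos hM (Real.exp_pos _)

theorem decayEnvelope_anti (hM : 0 ≤ M) (hlam : 0 ≤ lam) (huv : u ≤ v) :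
    decayEnvelope M lam s v ≤ decayEnvelope M lam s u := by
  unfold decayEnvelope
  gcongr ?_ * Real.exp ?_
  nlinarith

theorem le_decayEnvelope (hM : 0 ≤ M) (hlam : 0 ≤ lam) (hus : u ≤ s) :
    M ≤ decayEnvelope M lam s u :=
  le_mul_of_one_le_right hM (Real.one_le_exp (by nlinarith))

theorem growthBarrier_pos (hM : 0 < M) : 0 < growthBarrier M lam σ s b u :=
  mul_pos hM (Real.exp_pos _)

theorem growthBarrier_mono (hM : 0 ≤ M) (hσ : 0 ≤ σ) (huv : u ≤ v) :
    growthBarrier M lam σ s b u ≤ growthBarrier M lam σ s b v := by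
  unfold growthBarrier
  gcongr

theorem growthBarrier_le_decayEnvelope (hM : 0 ≤ M) (hrate : 0 ≤ σ + lam) (hub : u ≤ b) :
    growthBarrier M lam σ s b u ≤ decayEnvelope M lam s u := by
  unfold growthBarrier decayEnvelope
  gcongr ?_ * Real.exp ?_
  nlinarith

theorem growthBarrier_eq_exp_mul_decayEnvelope :
    growthBarrier M lam σ s b a = Real.exp (-(σ + lam) * (b - a)) * decayEnvelope M lam s a := by
  rw [growthBarrier, decayEnvelope, mul_left_comm, ← Real.exp_add]
  ring_nf

theorem decayEnvelope_sub_eq_exp_mul_growthBarrier (τ : ℝ) :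
    decayEnvelope M lam s (a - τ) =
      Real.exp (lam * τ + (σ + lam) * (b - a)) * growthBarrier M lam σ s b a := by
  rw [growthBarrier, decayEnvelope, mul_left_comm, ← Real.exp_add]
  ring_nf

theorem hasDerivAt_growthBarrier :
    HasDerivAt (growthBarrier M lam σ s b) (σ * growthBarrier M lam σ s b u) u := by
  have hexponent : HasDerivAt (fun u : ℝ => -lam * (b - s) + σ * (u - b)) (σ * 1) u :=
    (((hasDerivAt_id u).sub_const b).const_mul σ).const_add _
  refine (hexponent.exp.const_mul M).congr_deriv ?_
  rw [growthBarrier]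
  ring

end Envelope

section Razumikhin

variable {τ c σ lam q M s a b : ℝ} {W : ℝ → ℝ}

theorem razumikhin_condition_of_contact (hσ : 0 ≤ σ) (hlam : 0 ≤ lam) (hM : 0 < M)
    (hq : Real.exp (lam * τ + (σ + lam) * (b - a)) ≤ q) {x : ℝ} (hax : a ≤ x)
    (hpast : ∀ y ∈ Icc (a - τ) x, W y ≤ decayEnvelope M lam s y)
    (hWx : W x = growthBarrier M lam σ s b x) :
    ∀ θ ∈ Icc (-τ) (0 : ℝ), W (x + θ) ≤ q * W x := by
  intro θ hθ
  have hdelay : a - τ ≤ x + θ := by linarith [hθ.1]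
  calc W (x + θ) ≤ decayEnvelope M lam s (x + θ) := hpast _ ⟨hdelay, by linarith [hθ.2]⟩
    _ ≤ decayEnvelope M lam s (a - τ) := decayEnvelope_anti hM.le hlam hdelay
    _ = Real.exp (lam * τ + (σ + lam) * (b - a)) * growthBarrier M lam σ s b a :=
      decayEnvelope_sub_eq_exp_mul_growthBarrier τ
    _ ≤ q * growthBarrier M lam σ s b x :=
      mul_le_mul hq (growthBarrier_mono hM.le hσ hax) (growthBarrier_pos hM).le
        ((Real.exp_pos _).le.trans hq)
    _ = q * W x := by rw [hWx]

theorem le_decayEnvelope_of_razumikhin (hσ : 0 ≤ σ) (hlam : 0 ≤ lam) (hcσ : c < σ) (hM : 0 < M)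
    (hq : Real.exp (lam * τ + (σ + lam) * (b - a)) ≤ q)
    (hpast : ∀ u ∈ Icc (a - τ) a, W u ≤ decayEnvelope M lam s u)
    (hcont : ContinuousOn W (Ioc a b))
    (hstart : ∀ᶠ u in 𝓝[>] a, W u < growthBarrier M lam σ s b a)
    (hDini : ∀ u ∈ Ioo a b, (∀ θ ∈ Icc (-τ) (0 : ℝ), W (u + θ) ≤ q * W u) →
      upperRightDini W u ≤ ((c * W u : ℝ) : EReal)) :
    ∀ u ∈ Ioc a b, W u ≤ decayEnvelope M lam s u := by
  have hbarrier_le {u : ℝ} (hu : u ≤ b) :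
      growthBarrier M lam σ s b u ≤ decayEnvelope M lam s u :=
    growthBarrier_le_decayEnvelope hM.le (add_nonneg hσ hlam) hu
  suffices hbelow : ∀ u ∈ Ioc a b, W u ≤ growthBarrier M lam σ s b u from
    fun u hu => (hbelow u hu).trans (hbarrier_le hu.2)
  refine le_barrier_of_upperRightDini_lt_of_contact hcont
    (fun u _ => hasDerivAt_growthBarrier.continuousAt.continuousWithinAt)
    (fun u _ => hasDerivAt_growthBarrier.hasDerivWithinAt) ?_ ?_
  · filter_upwards [hstart, self_mem_nhdsWithin] with u hu hau
    exact hu.le.trans (growthBarrier_mono hM.le hσ (le_of_lt hau))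
  · intro x hx hbelow hWx
    have hpast_x : ∀ y ∈ Icc (a - τ) x, W y ≤ decayEnvelope M lam s y := fun y hy =>
      (le_or_gt y a).elim (fun hya => hpast y ⟨hy.1, hya⟩)
        fun hay => (hbelow y ⟨hay, hy.2⟩).trans (hbarrier_le (hy.2.trans hx.2.le))
    refine (hDini x hx
      (razumikhin_condition_of_contact hσ hlam hM hq hx.1.le hpast_x hWx)).trans_lt ?_
    rw [EReal.coe_lt_coe_iff, hWx]
    exact mul_lt_mul_of_pos_right hcσ (growthBarrier_pos hM)

theorem eventually_lt_growthBarrier_of_jump {η w : ℝ} (hM : 0 < M) (hη : 0 ≤ η)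
    (hgain : η < Real.exp (-(σ + lam) * (b - a))) (hWa : W a ≤ decayEnvelope M lam s a)
    (hjump : w ≤ η * W a) (hw : Tendsto W (𝓝[>] a) (𝓝 w)) :
    ∀ᶠ u in 𝓝[>] a, W u < growthBarrier M lam σ s b a := by
  refine hw.eventually_lt_const ?_
  calc w ≤ η * W a := hjump
    _ ≤ η * decayEnvelope M lam s a := mul_le_mul_of_nonneg_left hWa hη
    _ < Real.exp (-(σ + lam) * (b - a)) * decayEnvelope M lam s a :=
      mul_lt_mul_of_pos_right hgain (decayEnvelope_pos hM)
    _ = growthBarrier M lam σ s b a := growthBarrier_eq_exp_mul_decayEnvelope.symm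

end Razumikhin

theorem le_decayEnvelope_of_forall_gt {M lam s u w : ℝ}
    (h : ∀ M' > M, w ≤ decayEnvelope M' lam s u) : w ≤ decayEnvelope M lam s u := by
  have hcont : Continuous fun M' => decayEnvelope M' lam s u := continuous_mul_const _
  exact ge_of_tendsto (hcont.continuousWithinAt (s := Ioi M))
    (eventually_nhdsWithin_of_forall h)

theorem razumikhin_impulsive_exponential_stability_general
    {τ c σ lam q M : ℝ} {t : ℕ → ℝ} {W : ℝ → ℝ} {Wplus η : ℕ → ℝ}
    (hτ : 0 ≤ τ) (hσ : 0 ≤ σ) (hlam : 0 ≤ lam) (hcσ : c < σ) (hM : 0 ≤ M)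
    (htmono : Monotone t) (httop : Tendsto t atTop atTop)
    (hinit : ∀ u ∈ Icc (t 0 - τ) (t 0), W u ≤ M)
    (hcont : ∀ k, ContinuousOn W (Ioc (t k) (t (k + 1))))
    (hWplus : ∀ k, Tendsto W (𝓝[>] (t k)) (𝓝 (Wplus k)))
    (hDini : ∀ k, ∀ u ∈ Ioo (t k) (t (k + 1)),
      (∀ θ ∈ Icc (-τ) (0 : ℝ), W (u + θ) ≤ q * W u) →
        upperRightDini W u ≤ ((c * W u : ℝ) : EReal))
    (hη : ∀ k, 0 ≤ η k) (hjump : ∀ k, Wplus k ≤ η k * W (t k))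
    (hgain : ∀ k, η k < Real.exp (-(σ + lam) * (t (k + 1) - t k)))
    (hq : ∀ k, Real.exp (lam * τ + (σ + lam) * (t (k + 1) - t k)) ≤ q) :
    ∀ u, t 0 - τ ≤ u → W u ≤ M * Real.exp (-lam * (u - t 0)) := by
  intro u hu
  refine le_decayEnvelope_of_forall_gt fun M' hMM' => ?_
  have hM' : 0 < M' := hM.trans_lt hMM'
  suffices henvelope : ∀ k, ∀ v ∈ Icc (t 0 - τ) (t k), W v ≤ decayEnvelope M' lam (t 0) v by
    obtain ⟨k, hk⟩ := (httop.eventually_ge_atTop u).exists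
    exact henvelope k u ⟨hu, hk⟩
  intro k
  induction k with
  | zero =>
    exact fun v hv => ((hinit v hv).trans hMM'.le).trans (le_decayEnvelope hM'.le hlam hv.2)
  | succ k ih =>
    have h0k : t 0 ≤ t k := htmono (Nat.zero_le k)
    have hjump_lt := eventually_lt_growthBarrier_of_jump hM' (hη k) (hgain k)
      (ih (t k) ⟨by linarith, le_rfl⟩) (hjump k) (hWplus k)
    have hnext := le_decayEnvelope_of_razumikhin hσ hlam hcσ hM' (hq k)
      (fun v hv => ih v ⟨by linarith [hv.1], hv.2⟩) (hcont k) hjump_lt (hDini k)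
    exact fun v hv => (le_or_gt v (t k)).elim (fun hvk => ih v ⟨hv.1, hvk⟩)
      fun hkv => hnext v ⟨hkv, hv.2⟩

theorem exp_lt_of_log_lt_neg_of_one_div_le {η γ x : ℝ} (hη : 0 < η) (hγ : 1 / η ≤ γ)
    (hlog : Real.log η < -x) : Real.exp x < γ := by
  refine lt_of_lt_of_le ?_ hγ
  rw [one_div, ← Real.log_lt_log_iff (Real.exp_pos x) (inv_pos.2 hη), Real.log_exp, Real.log_inv]
  linarith

/-- **Razumikhin-type exponential stability with impulses (scalar form of Lemma 1).**
`t : ℕ → ℝ` is the strictly increasing sequence `t0 < t1 < t2 < ⋯` of impulse times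
tending to `∞`.  `W` is nonnegative on `[t0 − τ, ∞)`, continuous on `[t0 − τ, t0]` and on
each `(t_k, t_{k+1}]`, with right limit `Wplus k` at each `t_k`.  Under the Razumikhin
derivative condition (ii), the jump condition (iii) and the impulse-gain condition (iv),
`W(u) ≤ γ (sup_{θ∈[−τ,0]} W(t0+θ)) e^{−λ(u−t0)}` for all `u ≥ t0`. -/
theorem razumikhin_impulsive_exponential_stability
    (τ : ℝ) (hτ : 0 < τ)
    (t : ℕ → ℝ) (htmono : StrictMono t) (httop : Tendsto t atTop atTop)
    (W : ℝ → ℝ) (Wplus : ℕ → ℝ)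
    (hWnonneg : ∀ u, t 0 - τ ≤ u → 0 ≤ W u)
    (hWcont0 : ContinuousOn W (Icc (t 0 - τ) (t 0)))
    (hWcont : ∀ k : ℕ, ContinuousOn W (Ioc (t k) (t (k + 1))))
    (hWplus : ∀ k : ℕ, Tendsto W (nhdsWithin (t k) (Ioi (t k))) (nhds (Wplus k)))
    (c σ lam γ q : ℝ) (η : ℕ → ℝ)
    (hc : 0 < c) (hσ : 0 < σ) (hlam : 0 < lam) (hγ : 1 ≤ γ)
    (hq : γ * Real.exp (lam * τ) ≤ q) (hσlam : c ≤ σ - lam)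
    (hη : ∀ k, 0 < η k ∧ η k ≤ 1)
    -- (ii): Razumikhin-type Dini-derivative condition on each interval `[t_k, t_{k+1})`
    (hii : ∀ k : ℕ, ∀ u ∈ Ico (t k) (t (k + 1)),
      (∀ θ ∈ Icc (-τ) (0 : ℝ), W (u + θ) ≤ q * W u) →
        Filter.limsup (fun h : ℝ => (((W (u + h) - W u) / h : ℝ) : EReal))
            (nhdsWithin 0 (Ioi 0))
          ≤ ((c * W u : ℝ) : EReal))
    -- (iii): jump estimate at each impulse time
    (hiii : ∀ k : ℕ, Wplus k ≤ η k * W (t k))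
    -- (iv): impulse-gain conditions
    (hiv : ∀ k : ℕ, 1 / η k ≤ γ ∧ Real.log (η k) < -(σ + lam) * (t (k + 1) - t k)) :
    ∀ u, t 0 ≤ u →
      W u ≤ γ * sSup (W '' Icc (t 0 - τ) (t 0)) * Real.exp (-lam * (u - t 0)) := by
  intro u hu
  set S := sSup (W '' Icc (t 0 - τ) (t 0))
  have hS : 0 ≤ S := Real.sSup_nonneg (forall_mem_image.2 fun v hv => hWnonneg v hv.1)
  have hWS : ∀ v ∈ Icc (t 0 - τ) (t 0), W v ≤ S := fun v hv =>
    le_csSup (isCompact_Icc.bddAbove_image hWcont0) (mem_image_of_mem W hv)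
  have hgain_q (k : ℕ) : Real.exp (lam * τ + (σ + lam) * (t (k + 1) - t k)) ≤ q := by
    have hgain : Real.exp ((σ + lam) * (t (k + 1) - t k)) < γ :=
      exp_lt_of_log_lt_neg_of_one_div_le (hη k).1 (hiv k).1
        (by simpa only [neg_mul] using (hiv k).2)
    rw [add_comm, Real.exp_add]
    exact (mul_le_mul_of_nonneg_right hgain.le (Real.exp_pos _).le).trans hq
  have hWu : W u ≤ S * Real.exp (-lam * (u - t 0)) :=
    razumikhin_impulsive_exponential_stability_general hτ.le hσ.le hlam.le (by linarith) hS
      htmono.monotone httop hWS hWcont hWplus (fun k v hv => hii k v (Ioo_subset_Ico_self hv))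
      (fun k => (hη k).1.le) hiii (fun k => (Real.log_lt_iff_lt_exp (hη k).1).1 (hiv k).2)
      hgain_q u (by linarith)
  exact hWu.trans (mul_le_mul_of_nonneg_right (le_mul_of_one_le_left hS hγ) (Real.exp_pos _).le)
end

section
/- (Lemma 4, finite-time comparison lemma) Let α > 0 and 0 < η < 1 be constants, let t0 ∈ ℝ, and let V : [t0, ∞) → ℝ be a continuous, nonnegative, differentiable function satisfying V(t0) ≥ 0 and V̇(t) ≤ −α V(t)^η for all t ≥ t0. Set t1 = t0 + V(t0)^{1−η}/(α(1−η)). Then V(t)^{1−η} ≤ V(t0)^{1−η} − α(1−η)(t − t0) for all t0 ≤ t ≤ t1, and V(t) = 0 for all t ≥ t1. -/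
/-!
Where `V > 0`, the function `V ^ (1 - η)` has derivative
`(1 - η) * V ^ (-η) * V' ≤ -(α * (1 - η))`, so it lies below a line of that slope. The line
is a valid bound at any time `t` with `V t > 0`, because `V` cannot leave `0` once it has reached
it: it would have to increase at a positive value, where `V' ≤ 0`.
-/

section FiniteTimeComparison

open Set Filter Topology

theorem image_le_const_of_deriv_right_nonpos_of_lt {f f' : ℝ → ℝ} {a b c : ℝ}
    (hf : ContinuousOn f (Icc a b))
    (hf' : ∀ x ∈ Ico a b, HasDerivWithinAt f (f' x) (Ici x) x)
    (hac : f a ≤ c) (hnonpos : ∀ x ∈ Ico a b, c < f x → f' x ≤ 0) :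
    ∀ x ∈ Icc a b, f x ≤ c := by
  -- The barrier starts strictly above `c`, so that touching it at `a` also forces `c < f a`.
  have below_barrier (ε : ℝ) (hε : 0 < ε) : ∀ x ∈ Icc a b, f x ≤ c + ε * (x - a + 1) := by
    have hbarrier (x : ℝ) : HasDerivAt (fun y ↦ c + ε * (y - a + 1)) ε x := by
      simpa using ((((hasDerivAt_id x).sub_const a).add_const 1).const_mul ε).const_add c
    refine image_le_of_deriv_right_lt_deriv_boundary hf hf' (by linarith) hbarrier ?_
    intro x hx htouch
    have hgap : 0 < ε * (x - a + 1) := mul_pos hε (by linarith [hx.1])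
    exact (hnonpos x hx (by linarith)).trans_lt hε
  intro x hx
  have hlim : Tendsto (fun ε ↦ c + ε * (x - a + 1)) (𝓝[>] 0) (𝓝 c) :=
    tendsto_nhdsWithin_of_tendsto_nhds (Continuous.tendsto' (by fun_prop) _ _ (by simp))
  refine ge_of_tendsto hlim ?_
  filter_upwards [self_mem_nhdsWithin] with ε hε using below_barrier ε hε x hx

theorem pos_of_deriv_right_nonpos_of_pos {f f' : ℝ → ℝ} {a b : ℝ}
    (hf : ContinuousOn f (Icc a b))
    (hf' : ∀ x ∈ Ico a b, HasDerivWithinAt f (f' x) (Ici x) x)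
    (hnonpos : ∀ x ∈ Ico a b, 0 < f x → f' x ≤ 0) (hb : 0 < f b) :
    ∀ x ∈ Icc a b, 0 < f x := by
  intro x hx
  by_contra! hfx
  have hsub : Ico x b ⊆ Ico a b := Ico_subset_Ico_left hx.1
  exact hb.not_ge <|
    image_le_const_of_deriv_right_nonpos_of_lt (hf.mono (Icc_subset_Icc_left hx.1))
      (fun y hy ↦ hf' y (hsub hy)) hfx (fun y hy ↦ hnonpos y (hsub hy)) b (right_mem_Icc.2 hx.2)

variable {V V' : ℝ → ℝ} {α η a b : ℝ}

theorem rpow_one_sub_le_of_pos_of_deriv_right_le (hη : η ≤ 1) (hab : a ≤ b)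
    (hV : ContinuousOn V (Icc a b))
    (hV' : ∀ t ∈ Ico a b, HasDerivWithinAt V (V' t) (Ici t) t)
    (hpos : ∀ t ∈ Icc a b, 0 < V t) (hle : ∀ t ∈ Ico a b, V' t ≤ -α * V t ^ η) :
    V b ^ (1 - η) ≤ V a ^ (1 - η) - α * (1 - η) * (b - a) := by
  have hline (t : ℝ) :
      HasDerivAt (fun s ↦ V a ^ (1 - η) - α * (1 - η) * (s - a)) (-(α * (1 - η))) t := by
    simpa using (((hasDerivAt_id t).sub_const a).const_mul (α * (1 - η))).const_sub (V a ^ (1 - η))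
  have hslope (t : ℝ) (ht : t ∈ Ico a b) :
      V' t * (1 - η) * V t ^ (1 - η - 1) ≤ -(α * (1 - η)) := by
    have hVt : 0 < V t := hpos t (Ico_subset_Icc_self ht)
    have hcancel : V t ^ η * V t ^ (1 - η - 1) = 1 := by
      rw [← Real.rpow_add hVt, show η + (1 - η - 1) = 0 by ring, Real.rpow_zero]
    calc V' t * (1 - η) * V t ^ (1 - η - 1)
        ≤ -α * V t ^ η * (1 - η) * V t ^ (1 - η - 1) := by
          have := sub_nonneg.2 hη
          gcongr
          exact hle t ht
      _ = -(α * (1 - η)) * (V t ^ η * V t ^ (1 - η - 1)) := by ring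
      _ = -(α * (1 - η)) := by rw [hcancel, mul_one]
  exact image_le_of_deriv_right_le_deriv_boundary
    (hV.rpow_const fun t ht ↦ Or.inl (hpos t ht).ne')
    (fun t ht ↦ (hV' t ht).rpow_const (Or.inl (hpos t (Ico_subset_Icc_self ht)).ne'))
    (by simp) (fun t _ ↦ (hline t).continuousAt.continuousWithinAt)
    (fun t _ ↦ (hline t).hasDerivWithinAt) hslope (right_mem_Icc.2 hab)

theorem rpow_one_sub_le_max_of_deriv_right_le (hα : 0 ≤ α) (hη : η < 1) (hab : a ≤ b)
    (hV : ContinuousOn V (Icc a b))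
    (hV' : ∀ t ∈ Ico a b, HasDerivWithinAt V (V' t) (Ici t) t)
    (hb : 0 ≤ V b) (hle : ∀ t ∈ Ico a b, 0 < V t → V' t ≤ -α * V t ^ η) :
    V b ^ (1 - η) ≤ max (V a ^ (1 - η) - α * (1 - η) * (b - a)) 0 := by
  rcases hb.eq_or_lt with hzero | hbpos
  · rw [← hzero, Real.zero_rpow (sub_pos.2 hη).ne']
    exact le_max_right _ _
  · have hnonpos (t : ℝ) (ht : t ∈ Ico a b) (hVt : 0 < V t) : V' t ≤ 0 :=
      (hle t ht hVt).trans <|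
        mul_nonpos_of_nonpos_of_nonneg (neg_nonpos.2 hα) (Real.rpow_nonneg hVt.le η)
    have hpos := pos_of_deriv_right_nonpos_of_pos hV hV' hnonpos hbpos
    exact le_max_of_le_left <| rpow_one_sub_le_of_pos_of_deriv_right_le hη.le hab hV hV' hpos
      fun t ht ↦ hle t ht (hpos t (Ico_subset_Icc_self ht))

/- `V t ^ η` is a conventional value at `V t = 0` when `η ≤ 0` (`1` or `0`), hence the restriction
of the differential inequality to `0 < V t`. -/
theorem lemma4_finite_time_comparison_general {α η t₀ t₁ : ℝ} (hα : 0 < α) (hη : η < 1)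
    {V V' : ℝ → ℝ} (hV : ContinuousOn V (Ici t₀)) (hVnonneg : ∀ t, t₀ ≤ t → 0 ≤ V t)
    (hV' : ∀ t, t₀ ≤ t → HasDerivWithinAt V (V' t) (Ici t) t)
    (hle : ∀ t, t₀ ≤ t → 0 < V t → V' t ≤ -α * V t ^ η)
    (ht₁ : t₁ = t₀ + V t₀ ^ (1 - η) / (α * (1 - η))) :
    (∀ t, t₀ ≤ t → t ≤ t₁ → V t ^ (1 - η) ≤ V t₀ ^ (1 - η) - α * (1 - η) * (t - t₀)) ∧
    (∀ t, t₁ ≤ t → V t = 0) := by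
  have hrate : 0 < α * (1 - η) := mul_pos hα (sub_pos.2 hη)
  have hextinct : α * (1 - η) * (t₁ - t₀) = V t₀ ^ (1 - η) := by
    rw [ht₁, add_sub_cancel_left, mul_div_cancel₀ _ hrate.ne']
  have hline (t : ℝ) :
      V t₀ ^ (1 - η) - α * (1 - η) * (t - t₀) = α * (1 - η) * (t₁ - t) := by
    rw [← hextinct]
    ring
  have hbound (t : ℝ) (ht : t₀ ≤ t) : V t ^ (1 - η) ≤ max (α * (1 - η) * (t₁ - t)) 0 :=
    hline t ▸ rpow_one_sub_le_max_of_deriv_right_le hα.le hη ht (hV.mono Icc_subset_Ici_self)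
      (fun s hs ↦ hV' s hs.1) (hVnonneg t ht) fun s hs ↦ hle s hs.1
  have ht₀₁ : t₀ ≤ t₁ := by
    rw [ht₁, le_add_iff_nonneg_right]
    exact div_nonneg (Real.rpow_nonneg (hVnonneg t₀ le_rfl) _) hrate.le
  refine ⟨fun t ht htt₁ ↦ ?_, fun t ht ↦ ?_⟩
  · rw [hline]
    exact (hbound t ht).trans_eq (max_eq_left (mul_nonneg hrate.le (sub_nonneg.2 htt₁)))
  · have ht₀ : t₀ ≤ t := ht₀₁.trans ht
    have hrpow : V t ^ (1 - η) ≤ 0 := (hbound t ht₀).trans_eq <|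
      max_eq_right (mul_nonpos_of_nonneg_of_nonpos hrate.le (sub_nonpos.2 ht))
    exact (Real.rpow_eq_zero (hVnonneg t ht₀) (sub_pos.2 hη).ne').1 <|
      hrpow.antisymm (Real.rpow_nonneg (hVnonneg t ht₀) _)

end FiniteTimeComparison

/-- **Lemma 4 (finite-time comparison lemma).** If `V : [t0, ∞) → ℝ` is continuous,
nonnegative and differentiable with `V̇(t) ≤ −α V(t)^η` for all `t ≥ t0`, where `α > 0`
and `0 < η < 1`, and `t1 = t0 + V(t0)^{1−η}/(α(1−η))`, then
`V(t)^{1−η} ≤ V(t0)^{1−η} − α(1−η)(t−t0)` on `[t0, t1]` and `V(t) = 0` for all `t ≥ t1`. -/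
theorem lemma4_finite_time_comparison
    (α η t0 : ℝ) (hα : 0 < α) (hη0 : 0 < η) (hη1 : η < 1)
    (V V' : ℝ → ℝ)
    (hV0 : ∀ t, t0 ≤ t → 0 ≤ V t)
    (hVderiv : ∀ t, t0 ≤ t → HasDerivAt V (V' t) t)
    (hVineq : ∀ t, t0 ≤ t → V' t ≤ -α * V t ^ η)
    (t1 : ℝ) (ht1 : t1 = t0 + V t0 ^ (1 - η) / (α * (1 - η))) :
    (∀ t, t0 ≤ t → t ≤ t1 → V t ^ (1 - η) ≤ V t0 ^ (1 - η) - α * (1 - η) * (t - t0)) ∧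
    (∀ t, t1 ≤ t → V t = 0) := by
  exact lemma4_finite_time_comparison_general hα hη1
    (fun t ht ↦ (hVderiv t ht).continuousAt.continuousWithinAt) hV0
    (fun t ht ↦ (hVderiv t ht).hasDerivWithinAt) (fun t ht _ ↦ hVineq t ht) ht1
end

section
/- (Settling time used in Theorem 2) Let k > 0 and 0 < μ < 1 be constants, t0 ∈ ℝ, and let V : [t0, ∞) → ℝ be a continuous, nonnegative, differentiable function with V̇(t) ≤ −2^{(1+μ)/2} k V(t)^{(1+μ)/2} for all t ≥ t0. Then V(t) = 0 for all t ≥ t1, where t1 = t0 + (1/(k(1−μ))) (2 V(t0))^{(1−μ)/2}. -/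
/-!
Where `V` is positive, `V̇ ≤ -c V ^ α` says that the right derivative of `V ^ (1 - α)` is at most
`-c (1 - α)`, so this quantity decreases at least linearly and must be exhausted by the time
`V a ^ (1 - α) / (c (1 - α))`. Moreover `V` cannot become positive again once it has reached zero.
The settling time estimate is the case `α = (1 + μ) / 2`, applied to `2 V`.
-/

open Set

section RightDerivative

variable {V V' : ℝ → ℝ} {a b c α : ℝ}

theorem le_max_zero_of_right_deriv_neg (hab : a ≤ b) (hV : ContinuousOn V (Icc a b))
    (hV' : ∀ t ∈ Ico a b, HasDerivWithinAt V (V' t) (Ici t) t)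
    (hneg : ∀ t ∈ Ico a b, 0 < V t → V' t < 0) : V b ≤ max (V a) 0 := by
  -- `max (V a) 0` may itself fail to be a barrier: at level `0` nothing is assumed about `V'`.
  refine le_of_forall_gt_imp_ge_of_dense fun ε hε ↦ ?_
  have hε0 : 0 < ε := (le_max_right _ _).trans_lt hε
  exact image_le_of_deriv_right_lt_deriv_boundary hV hV' ((le_max_left _ _).trans hε.le)
    (fun t ↦ hasDerivAt_const t ε) (fun t ht htε ↦ hneg t ht (htε ▸ hε0)) (right_mem_Icc.2 hab)

theorem le_of_right_deriv_neg_of_pos (hV : ContinuousOn V (Icc a b))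
    (hV' : ∀ t ∈ Ico a b, HasDerivWithinAt V (V' t) (Ici t) t)
    (hneg : ∀ t ∈ Ico a b, 0 < V t → V' t < 0) (hb : 0 < V b) {s : ℝ} (hs : s ∈ Icc a b) :
    V b ≤ V s := by
  have hsub : Ico s b ⊆ Ico a b := Ico_subset_Ico_left hs.1
  have hmax : V b ≤ max (V s) 0 :=
    le_max_zero_of_right_deriv_neg hs.2 (hV.mono (Icc_subset_Icc_left hs.1))
      (fun t ht ↦ hV' t (hsub ht)) (fun t ht ↦ hneg t (hsub ht))
  exact (le_max_iff.1 hmax).resolve_right hb.not_ge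

theorem rpow_one_sub_le_of_right_deriv_le (hab : a ≤ b) (hα : α ≤ 1)
    (hV : ContinuousOn V (Icc a b)) (hpos : ∀ t ∈ Icc a b, 0 < V t)
    (hV' : ∀ t ∈ Ico a b, HasDerivWithinAt V (V' t) (Ici t) t)
    (hle : ∀ t ∈ Ico a b, V' t ≤ -c * V t ^ α) :
    V b ^ (1 - α) ≤ V a ^ (1 - α) - c * (1 - α) * (b - a) := by
  have hpow : ∀ t ∈ Ico a b, HasDerivWithinAt (fun s ↦ V s ^ (1 - α))
      (V' t * (1 - α) * V t ^ (1 - α - 1)) (Ici t) t := fun t ht ↦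
    (hV' t ht).rpow_const (Or.inl (hpos t (Ico_subset_Icc_self ht)).ne')
  have hline : ∀ t, HasDerivAt (fun s ↦ V a ^ (1 - α) - c * (1 - α) * (s - a))
      (-(c * (1 - α))) t := fun t ↦ by
    simpa using (((hasDerivAt_id t).sub_const a).const_mul (c * (1 - α))).const_sub (V a ^ (1 - α))
  have hbound : ∀ t ∈ Ico a b, V' t * (1 - α) * V t ^ (1 - α - 1) ≤ -(c * (1 - α)) := by
    intro t ht
    have ht0 : 0 < V t := hpos t (Ico_subset_Icc_self ht)
    have hcancel : V t ^ α * V t ^ (1 - α - 1) = 1 := by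
      rw [← Real.rpow_add ht0, show α + (1 - α - 1) = 0 by ring, Real.rpow_zero]
    calc V' t * (1 - α) * V t ^ (1 - α - 1)
        ≤ -c * V t ^ α * (1 - α) * V t ^ (1 - α - 1) := by
          have := sub_nonneg.2 hα
          gcongr
          exact hle t ht
      _ = -(c * (1 - α)) := by linear_combination -c * (1 - α) * hcancel
  exact image_le_of_deriv_right_le_deriv_boundary
    (hV.rpow_const fun t ht ↦ Or.inl (hpos t ht).ne') hpow (by simp)
    (fun t _ ↦ (hline t).continuousAt.continuousWithinAt)
    (fun t _ ↦ (hline t).hasDerivWithinAt) hbound (right_mem_Icc.2 hab)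

theorem nonpos_of_right_deriv_le_neg_mul_rpow (hc : 0 < c) (hα : α < 1) (ha : 0 ≤ V a)
    (hV : ContinuousOn V (Icc a b))
    (hV' : ∀ t ∈ Ico a b, HasDerivWithinAt V (V' t) (Ici t) t)
    (hle : ∀ t ∈ Ico a b, 0 < V t → V' t ≤ -c * V t ^ α)
    (hb : a + V a ^ (1 - α) / (c * (1 - α)) ≤ b) : V b ≤ 0 := by
  have hrate : 0 < c * (1 - α) := mul_pos hc (sub_pos.2 hα)
  have hab : a ≤ b := (le_add_of_nonneg_right (by positivity)).trans hb
  have hneg : ∀ t ∈ Ico a b, 0 < V t → V' t < 0 := fun t ht ht0 ↦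
    (hle t ht ht0).trans_lt (mul_neg_of_neg_of_pos (neg_lt_zero.2 hc) (Real.rpow_pos_of_pos ht0 α))
  by_contra! hVb
  have hpos : ∀ t ∈ Icc a b, 0 < V t := fun t ht ↦
    hVb.trans_le (le_of_right_deriv_neg_of_pos hV hV' hneg hVb ht)
  have hdecay : V b ^ (1 - α) ≤ V a ^ (1 - α) - c * (1 - α) * (b - a) :=
    rpow_one_sub_le_of_right_deriv_le hab hα.le hV hpos hV'
      fun t ht ↦ hle t ht (hpos t (Ico_subset_Icc_self ht))
  have hexhausted : V a ^ (1 - α) ≤ c * (1 - α) * (b - a) :=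
    (div_le_iff₀' hrate).1 (le_sub_iff_add_le'.2 hb)
  exact (Real.rpow_pos_of_pos hVb (1 - α)).not_ge (hdecay.trans (sub_nonpos.2 hexhausted))

end RightDerivative

theorem settling_time_estimate_general {k μ t0 : ℝ} (hk : 0 < k) (hμ1 : μ < 1) {V V' : ℝ → ℝ}
    (hV0 : 0 ≤ V t0) (hVcont : ContinuousOn V (Ici t0))
    (hVderiv : ∀ t, t0 ≤ t → HasDerivWithinAt V (V' t) (Ici t) t)
    (hVineq : ∀ t, t0 ≤ t → 0 < V t →
      V' t ≤ -(2 : ℝ) ^ ((1 + μ) / 2) * k * V t ^ ((1 + μ) / 2))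
    {t : ℝ} (ht : t0 + (1 / (k * (1 - μ))) * (2 * V t0) ^ ((1 - μ) / 2) ≤ t) : V t ≤ 0 := by
  have hineq : ∀ s ∈ Ico t0 t, 0 < 2 * V s → 2 * V' s ≤ -(2 * k) * (2 * V s) ^ ((1 + μ) / 2) := by
    intro s hs hs0
    have hs0' : 0 < V s := pos_of_mul_pos_right hs0 zero_le_two
    rw [Real.mul_rpow zero_le_two hs0'.le]
    linarith [hVineq s hs.1 hs0']
  have hα : 1 - (1 + μ) / 2 = (1 - μ) / 2 := by ring
  have htime : t0 + (2 * V t0) ^ (1 - (1 + μ) / 2) / (2 * k * (1 - (1 + μ) / 2)) ≤ t := by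
    convert ht using 2
    rw [hα, one_div_mul_eq_div]
    ring
  have htwo : 2 * V t ≤ 0 :=
    nonpos_of_right_deriv_le_neg_mul_rpow (V := fun s ↦ 2 * V s) (by positivity) (by linarith)
      (by positivity) ((hVcont.mono Icc_subset_Ici_self).const_mul 2)
      (fun s hs ↦ (hVderiv s hs.1).const_mul 2) hineq htime
  linarith

/-- **Settling time estimate used in Theorem 2.** If `V : [t0, ∞) → ℝ` is continuous,
nonnegative and differentiable with `V̇(t) ≤ −2^{(1+μ)/2} k V(t)^{(1+μ)/2}` for all
`t ≥ t0`, where `k > 0` and `0 < μ < 1`, then `V(t) = 0` for all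
`t ≥ t1 = t0 + (1/(k(1−μ))) (2 V(t0))^{(1−μ)/2}`. -/
theorem settling_time_estimate
    (k μ t0 : ℝ) (hk : 0 < k) (hμ0 : 0 < μ) (hμ1 : μ < 1)
    (V V' : ℝ → ℝ)
    (hV0 : ∀ t, t0 ≤ t → 0 ≤ V t)
    (hVderiv : ∀ t, t0 ≤ t → HasDerivAt V (V' t) t)
    (hVineq : ∀ t, t0 ≤ t → V' t ≤ -(2 : ℝ) ^ ((1 + μ) / 2) * k * V t ^ ((1 + μ) / 2))
    (t1 : ℝ) (ht1 : t1 = t0 + (1 / (k * (1 - μ))) * (2 * V t0) ^ ((1 - μ) / 2)) :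
    ∀ t, t1 ≤ t → V t = 0 := by
  intro t ht
  subst ht1
  have ht0 : t0 ≤ t := by
    have := hV0 t0 le_rfl
    have := sub_pos.2 hμ1
    exact (le_add_of_nonneg_right (by positivity)).trans ht
  exact (settling_time_estimate_general hk hμ1 (hV0 t0 le_rfl)
    (fun s hs ↦ (hVderiv s hs).continuousAt.continuousWithinAt)
    (fun s hs ↦ (hVderiv s hs).hasDerivWithinAt) (fun s hs _ ↦ hVineq s hs) ht).antisymm
    (hV0 t ht0)
end

section
/- (Inequality (21)) Let Q be a real symmetric positive definite n×n matrix, let m ≥ 1 and 0 ≤ ρ < m be integers, let e_1, …, e_m ∈ ℝ^n, and let S ⊆ {1,…,m} with |S| = ρ be such that ‖e_i‖ ≥ ‖e_j‖ whenever i ∈ S and j ∉ S. Then (1/(m−ρ)) Σ_{j ∉ S} e_jᵀ Q e_j ≤ (λmax(Q)/(λmin(Q) · m)) Σ_{i=1}^m e_iᵀ Q e_i. -/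
open Matrix

/-- The largest eigenvalue of a real symmetric matrix, characterized as the
supremum of the Rayleigh quotient over the Euclidean unit sphere. -/
noncomputable def lamMax {k : ℕ} (A : Matrix (Fin k) (Fin k) ℝ) : ℝ :=
  sSup {r : ℝ | ∃ x : EuclideanSpace ℝ (Fin k), ‖x‖ = 1 ∧ r = x ⬝ᵥ A.mulVec x}

/-- The smallest eigenvalue of a real symmetric matrix, characterized as the
infimum of the Rayleigh quotient over the Euclidean unit sphere. -/
noncomputable def lamMin {k : ℕ} (A : Matrix (Fin k) (Fin k) ℝ) : ℝ :=
  sInf {r : ℝ | ∃ x : EuclideanSpace ℝ (Fin k), ‖x‖ = 1 ∧ r = x ⬝ᵥ A.mulVec x}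

/-!
Both averages are compared with averages of `‖eᵢ‖²` through
`λmin(Q) ‖x‖² ≤ xᵀ Q x ≤ λmax(Q) ‖x‖²`, at a total cost of the factor `λmax(Q) / λmin(Q)`. For the
squared norms themselves no factor is lost, since discarding the largest values lowers an average.
-/

open Finset
open scoped BigOperators

section Expect

variable {ι K : Type*} [Fintype ι] [DecidableEq ι]
  [Field K] [LinearOrder K] [IsStrictOrderedRing K] {S : Finset ι} {f g : ι → K} {a b : K}

lemma expect_compl_le_expect (hS : Sᶜ.Nonempty) (hg : ∀ i ∈ S, ∀ j ∉ S, g j ≤ g i) :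
    𝔼 j ∈ Sᶜ, g j ≤ 𝔼 i, g i := by
  have : Nonempty ι := hS.to_type
  have le_on_S : ∀ i ∈ S, 𝔼 j ∈ Sᶜ, g j ≤ g i := fun i hi ↦
    expect_le hS fun j hj ↦ hg i hi j (mem_compl.mp hj)
  rw [expect_eq_sum_div_card univ, le_div_iff₀' (by simp [Fintype.card_pos])]
  calc (#univ : K) * 𝔼 j ∈ Sᶜ, g j
      = #S • (𝔼 j ∈ Sᶜ, g j) + #Sᶜ • 𝔼 j ∈ Sᶜ, g j := by
        rw [← add_smul, card_add_card_compl, nsmul_eq_mul, card_univ]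
    _ ≤ ∑ i ∈ S, g i + ∑ j ∈ Sᶜ, g j := by
        rw [card_smul_expect]
        gcongr
        exact card_nsmul_le_sum S g _ le_on_S
    _ = ∑ i, g i := sum_add_sum_compl S g

lemma expect_compl_le_div_mul_expect (ha : 0 < a) (hb : 0 ≤ b) (hgf : ∀ i, a * g i ≤ f i)
    (hfg : ∀ i, f i ≤ b * g i) (hS : Sᶜ.Nonempty) (hg : ∀ i ∈ S, ∀ j ∉ S, g j ≤ g i) :
    𝔼 j ∈ Sᶜ, f j ≤ b / a * 𝔼 i, f i :=
  calc 𝔼 j ∈ Sᶜ, f j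
      ≤ 𝔼 j ∈ Sᶜ, b * g j := expect_le_expect fun j _ ↦ hfg j
    _ = b * 𝔼 j ∈ Sᶜ, g j := (mul_expect _ _ _).symm
    _ ≤ b * 𝔼 i, g i := by gcongr; exact expect_compl_le_expect hS hg
    _ = b / a * 𝔼 i, a * g i := by rw [← mul_expect]; field_simp
    _ ≤ b / a * 𝔼 i, f i := by gcongr with i; exact hgf i

end Expect

section NumericalRange

variable {ι : Type*} [Fintype ι]

/-- The numerical range of a real matrix: the values of its quadratic form on the Euclidean unit
sphere. Its supremum and infimum are `lamMax` and `lamMin`. -/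
def numericalRange (A : Matrix ι ι ℝ) : Set ℝ :=
  {r : ℝ | ∃ x : EuclideanSpace ℝ ι, ‖x‖ = 1 ∧ r = x ⬝ᵥ A.mulVec x}

lemma isCompact_numericalRange (A : Matrix ι ι ℝ) : IsCompact (numericalRange A) := by
  have continuous_quadratic_form : Continuous fun x : EuclideanSpace ℝ ι ↦ x ⬝ᵥ A.mulVec x := by
    fun_prop
  convert (isCompact_sphere (0 : EuclideanSpace ℝ ι) 1).image continuous_quadratic_form
  ext r
  simp only [numericalRange, Set.mem_ofPred_eq, Set.mem_image, mem_sphere_zero_iff_norm, eq_comm]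

lemma numericalRange_nonempty [Nonempty ι] (A : Matrix ι ι ℝ) : (numericalRange A).Nonempty :=
  let ⟨x, hx⟩ := exists_norm_eq (EuclideanSpace ℝ ι) zero_le_one
  ⟨_, x, hx, rfl⟩

lemma dotProduct_mulVec_div_norm_sq_mem_numericalRange (A : Matrix ι ι ℝ)
    {x : EuclideanSpace ℝ ι} (hx : x ≠ 0) :
    x ⬝ᵥ A.mulVec x / ‖x‖ ^ 2 ∈ numericalRange A := by
  refine ⟨‖x‖⁻¹ • x, norm_smul_inv_norm (𝕜 := ℝ) hx, ?_⟩
  rw [WithLp.ofLp_smul, mulVec_smul, smul_dotProduct, dotProduct_smul, smul_eq_mul, smul_eq_mul]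
  field

lemma pos_of_mem_numericalRange {A : Matrix ι ι ℝ} (hA : ∀ x ≠ 0, 0 < x ⬝ᵥ A.mulVec x)
    {r : ℝ} (hr : r ∈ numericalRange A) : 0 < r := by
  obtain ⟨x, hx, rfl⟩ := hr
  refine hA x fun h ↦ ?_
  simp [(WithLp.ofLp_eq_zero 2).mp h] at hx

end NumericalRange

section ExtremeEigenvalues

variable {k : ℕ} (A : Matrix (Fin k) (Fin k) ℝ)

lemma dotProduct_mulVec_le_lamMax_mul_norm_sq (x : EuclideanSpace ℝ (Fin k)) :
    x ⬝ᵥ A.mulVec x ≤ lamMax A * ‖x‖ ^ 2 := by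
  obtain rfl | hx := eq_or_ne x 0
  · simp
  · rw [← div_le_iff₀ (by positivity)]
    exact le_csSup (isCompact_numericalRange A).bddAbove
      (dotProduct_mulVec_div_norm_sq_mem_numericalRange A hx)

lemma lamMin_mul_norm_sq_le_dotProduct_mulVec (x : EuclideanSpace ℝ (Fin k)) :
    lamMin A * ‖x‖ ^ 2 ≤ x ⬝ᵥ A.mulVec x := by
  obtain rfl | hx := eq_or_ne x 0
  · simp
  · rw [← le_div_iff₀ (by positivity)]
    exact csInf_le (isCompact_numericalRange A).bddBelow
      (dotProduct_mulVec_div_norm_sq_mem_numericalRange A hx)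

variable {A}

lemma lamMin_pos [Nonempty (Fin k)] (hA : ∀ x ≠ 0, 0 < x ⬝ᵥ A.mulVec x) : 0 < lamMin A :=
  pos_of_mem_numericalRange hA <|
    (isCompact_numericalRange A).sInf_mem (numericalRange_nonempty A)

lemma lamMax_pos [Nonempty (Fin k)] (hA : ∀ x ≠ 0, 0 < x ⬝ᵥ A.mulVec x) : 0 < lamMax A :=
  pos_of_mem_numericalRange hA <|
    (isCompact_numericalRange A).sSup_mem (numericalRange_nonempty A)

end ExtremeEigenvalues

theorem averaging_quadratic_form_inequality_general {ι : Type*} [Fintype ι] [DecidableEq ι]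
    {n : ℕ} {Q : Matrix (Fin n) (Fin n) ℝ} (hQ : ∀ x ≠ 0, 0 < x ⬝ᵥ Q.mulVec x)
    (e : ι → EuclideanSpace ℝ (Fin n)) {S : Finset ι} (hcard : #S < Fintype.card ι)
    (hS : ∀ i ∈ S, ∀ j ∉ S, ‖e j‖ ≤ ‖e i‖) :
    (1 / ((Fintype.card ι : ℝ) - #S)) * ∑ j ∈ Sᶜ, e j ⬝ᵥ Q.mulVec (e j)
      ≤ (lamMax Q / (lamMin Q * Fintype.card ι)) * ∑ i, e i ⬝ᵥ Q.mulVec (e i) := by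
  cases isEmpty_or_nonempty (Fin n)
  · simp only [dotProduct_of_isEmpty, sum_const_zero, mul_zero, le_refl]
  have hSc : Sᶜ.Nonempty := by rwa [← card_pos, card_compl, tsub_pos_iff_lt]
  have expect_compl_le : 𝔼 j ∈ Sᶜ, e j ⬝ᵥ Q.mulVec (e j)
      ≤ lamMax Q / lamMin Q * 𝔼 i, e i ⬝ᵥ Q.mulVec (e i) :=
    expect_compl_le_div_mul_expect (lamMin_pos hQ) (lamMax_pos hQ).le
      (fun i ↦ lamMin_mul_norm_sq_le_dotProduct_mulVec Q (e i))
      (fun i ↦ dotProduct_mulVec_le_lamMax_mul_norm_sq Q (e i)) hSc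
      fun i hi j hj ↦ pow_le_pow_left₀ (norm_nonneg _) (hS i hi j hj) 2
  rw [expect_eq_sum_div_card, expect_eq_sum_div_card, card_compl, Nat.cast_sub hcard.le,
    card_univ] at expect_compl_le
  convert expect_compl_le using 1 <;> ring

/-- **Inequality (21).** If `Q` is symmetric positive definite, and `S` consists of `ρ`
vectors with the largest norms among `e₁, …, e_m ∈ ℝⁿ` (`0 ≤ ρ < m`), then
`(1/(m−ρ)) Σ_{j∉S} eⱼᵀ Q eⱼ ≤ (λmax(Q)/(λmin(Q) m)) Σᵢ eᵢᵀ Q eᵢ`. -/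
theorem averaging_quadratic_form_inequality {n m ρ : ℕ} (hm : 1 ≤ m) (hρ : ρ < m)
    (Q : Matrix (Fin n) (Fin n) ℝ) (hQ : Q.PosDef)
    (e : Fin m → EuclideanSpace ℝ (Fin n))
    (S : Finset (Fin m)) (hcard : S.card = ρ)
    (hS : ∀ i ∈ S, ∀ j ∉ S, ‖e j‖ ≤ ‖e i‖) :
    (1 / ((m : ℝ) - ρ)) * ∑ j ∈ Sᶜ, e j ⬝ᵥ Q.mulVec (e j)
      ≤ (lamMax Q / (lamMin Q * m)) * ∑ i, e i ⬝ᵥ Q.mulVec (e i) := by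
  subst hcard
  simpa using averaging_quadratic_form_inequality_general
    (fun x hx ↦ by simpa using hQ.dotProduct_mulVec_pos hx) e (by simpa using hρ) hS
end
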